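/- Let p > 2, let N ≥ 1 be an integer, and let f ∈ C^1([0,∞)) satisfy (f0), (f1), (f2). If there exist n pairwise distinct positive constants u_0^{(1)}, …, u_0^{(n)} each satisfying (f3) (i.e., f(u_0^{(i)}) = (u_0^{(i)})^{p−1} and f'(u_0^{(i)}) > (p−1)(u_0^{(i)})^{p−2} for each i), then there exist at least n pairwise distinct functions u^{(1)}, …, u^{(n)}, each of which is a nonconstant, positive (u^{(i)}(r) > 0 on [0,1]), nondecreasing radial profile solution of the Neumann problem −Δ_p u + u^{p−1} = f(u) in the unit ball of ℝ^N. -/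

import Mathlib

open Real Filter Set

noncomputable def flux (p : ℝ) (N : ℕ) (u' : ℝ → ℝ) (s : ℝ) : ℝ :=
  s ^ (N - 1) * (|u' s| ^ (p - 2) * u' s)

def IsRadialNeumannSolution (p : ℝ) (N : ℕ) (f : ℝ → ℝ) (u u' : ℝ → ℝ) : Prop :=
  (∀ r ∈ Set.Icc (0:ℝ) 1, HasDerivWithinAt u (u' r) (Set.Icc 0 1) r) ∧
  ContinuousOn u' (Set.Icc 0 1) ∧
  u' 0 = 0 ∧ u' 1 = 0 ∧
  ∀ r ∈ Set.Ioo (0:ℝ) 1,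
    HasDerivAt (flux p N u') (r ^ (N - 1) * ((u r) ^ (p - 1) - f (u r))) r

open Topology NNReal

structure RS (ψ g a : ℝ → ℝ) (d : ℝ) (u w : ℝ → ℝ) : Prop where
  u0 : u 0 = d
  w0 : w 0 = 0
  hu : ∀ t ∈ Icc (0:ℝ) 1, HasDerivWithinAt u (ψ (w t / a t)) (Icc 0 1) t
  hw : ∀ t ∈ Icc (0:ℝ) 1, HasDerivWithinAt w (a t * g (u t)) (Icc 0 1) t

theorem mvt_aux {f f' : ℝ → ℝ} (h : ∀ t ∈ Icc (0:ℝ) 1, HasDerivWithinAt f (f' t) (Icc 0 1) t)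
    {x y : ℝ} (hx : 0 ≤ x) (hxy : x < y) (hy : y ≤ 1) :
    ∃ c ∈ Ioo x y, f y - f x = f' c * (y - x) := by
  obtain ⟨c, hc, hc'⟩ := exists_hasDerivAt_eq_slope f f' hxy
    (fun t ht => ((h t ⟨hx.trans ht.1, ht.2.trans hy⟩).continuousWithinAt).mono
      (Icc_subset_Icc hx hy))
    (fun t ht => (h t ⟨hx.trans ht.1.le, ht.2.le.trans hy⟩).hasDerivAt
      (Icc_mem_nhds (hx.trans_lt ht.1) (ht.2.trans_le hy)))
  refine ⟨c, hc, ?_⟩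
  rw [hc', div_mul_cancel₀ _ (by linarith)]

theorem mvt_le {f f' : ℝ → ℝ} (h : ∀ t ∈ Icc (0:ℝ) 1, HasDerivWithinAt f (f' t) (Icc 0 1) t)
    {x y C : ℝ} (hx : 0 ≤ x) (hxy : x ≤ y) (hy : y ≤ 1) (hC : ∀ t ∈ Ioo x y, f' t ≤ C) :
    f y - f x ≤ C * (y - x) := by
  rcases hxy.eq_or_lt with rfl | hlt
  · simp
  obtain ⟨c, hc, e⟩ := mvt_aux h hx hlt hy
  rw [e]
  exact mul_le_mul_of_nonneg_right (hC c hc) (by linarith)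

theorem mvt_ge {f f' : ℝ → ℝ} (h : ∀ t ∈ Icc (0:ℝ) 1, HasDerivWithinAt f (f' t) (Icc 0 1) t)
    {x y C : ℝ} (hx : 0 ≤ x) (hxy : x ≤ y) (hy : y ≤ 1) (hC : ∀ t ∈ Ioo x y, C ≤ f' t) :
    C * (y - x) ≤ f y - f x := by
  rcases hxy.eq_or_lt with rfl | hlt
  · simp
  obtain ⟨c, hc, e⟩ := mvt_aux h hx hlt hy
  rw [e]
  exact mul_le_mul_of_nonneg_right (hC c hc) (by linarith)

theorem cont_of {f f' : ℝ → ℝ} (h : ∀ t ∈ Icc (0:ℝ) 1, HasDerivWithinAt f (f' t) (Icc 0 1) t) :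
    ContinuousOn f (Icc 0 1) := fun t ht => (h t ht).continuousWithinAt

theorem rs_exists {ψ g a : ℝ → ℝ} {Kψ Kg : ℝ≥0} {Mψ Mg amin A : ℝ} (hψ : LipschitzWith Kψ ψ)
    (hg : LipschitzWith Kg g) (hψb : ∀ y, |ψ y| ≤ Mψ) (hgb : ∀ y, |g y| ≤ Mg) (hamin : 0 < amin)
    (hac : ContinuousOn a (Icc 0 1)) (ha : ∀ t ∈ Icc (0:ℝ) 1, amin ≤ a t ∧ a t ≤ A) :
    (∀ d, ∃ u w, RS ψ g a d u w) ∧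
      ∃ L : ℝ, ∀ d d' u w u' w', RS ψ g a d u w → RS ψ g a d' u' w' →
        ∀ t ∈ Icc (0:ℝ) 1, |u t - u' t| ≤ L * |d - d'| ∧ |w t - w' t| ≤ L * |d - d'| := by
  have hA : 0 < A := by have := ha 0 (by simp); linarith
  have hMψ : 0 ≤ Mψ := (abs_nonneg _).trans (hψb 0)
  have hMg : 0 ≤ Mg := (abs_nonneg _).trans (hgb 0)
  let F : ℝ → ℝ × ℝ → ℝ × ℝ := fun t x => (ψ (x.2 / a t), a t * g x.1)
  let K : ℝ≥0 := ⟨Kψ / amin + A * Kg, by positivity⟩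
  have hK : (K : ℝ) = Kψ / amin + A * Kg := rfl
  have hFL : ∀ t ∈ Icc (0:ℝ) 1, LipschitzWith K (F t) := by
    intro t ht
    obtain ⟨h1, h2⟩ := ha t ht
    have h0 : 0 < a t := by linarith
    refine LipschitzWith.of_dist_le_mul fun x y => ?_
    have hd1 : |x.1 - y.1| ≤ dist x y := by rw [← Real.dist_eq]; exact le_max_left _ _
    have hd2 : |x.2 - y.2| ≤ dist x y := by rw [← Real.dist_eq]; exact le_max_right _ _
    have e1 := hψ.dist_le_mul (x.2 / a t) (y.2 / a t)
    have e2 := hg.dist_le_mul x.1 y.1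
    rw [Real.dist_eq, Real.dist_eq] at e1 e2
    have hdn : 0 ≤ dist x y := dist_nonneg
    rw [div_sub_div_same, abs_div, abs_of_pos h0] at e1
    have e3 : |x.2 - y.2| / a t ≤ dist x y / amin := by gcongr
    have p1 : (0:ℝ) ≤ Kψ / amin * dist x y := by positivity
    have p2 : (0:ℝ) ≤ A * Kg * dist x y := by positivity
    refine max_le ?_ ?_
    · show dist (ψ (x.2 / a t)) (ψ (y.2 / a t)) ≤ _
      rw [Real.dist_eq, hK]
      calc _ ≤ Kψ * (dist x y / amin) := e1.trans (by gcongr)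
        _ = Kψ / amin * dist x y := by ring
        _ ≤ _ := by linarith
    · show dist (a t * g x.1) (a t * g y.1) ≤ _
      rw [Real.dist_eq, ← mul_sub, abs_mul, abs_of_pos h0, hK]
      calc _ ≤ A * (Kg * dist x y) := by
            refine mul_le_mul h2 (e2.trans (by gcongr)) (abs_nonneg _) hA.le
        _ = A * Kg * dist x y := by ring
        _ ≤ _ := by linarith
  have hex : ∀ d : ℝ, ∃ α : ℝ → ℝ × ℝ, α 0 = (d, 0) ∧
      ∀ t ∈ Icc (0:ℝ) 1, HasDerivWithinAt α (F t (α t)) (Icc 0 1) t := by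
    intro d
    let M : ℝ≥0 := ⟨max Mψ (A * Mg), by positivity⟩
    have hpl : IsPicardLindelof F (tmin := 0) (tmax := 1) ⟨0, by simp⟩ ((d, 0) : ℝ × ℝ) M 0 M K := by
      refine ⟨fun t ht => (hFL t ht).lipschitzOnWith, ?_, ?_, ?_⟩
      · intro x _
        refine ContinuousOn.prodMk (hψ.continuous.comp_continuousOn ?_) (hac.mul continuousOn_const)
        refine continuousOn_const.div hac fun t ht => ?_
        have := (ha t ht).1
        linarith
      · intro t ht x _
        have h1 := ha t ht
        refine max_le ((hψb _).trans (le_max_left _ _)) ?_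
        show |a t * g x.1| ≤ max Mψ (A * Mg)
        rw [abs_mul, abs_of_pos (by linarith)]
        exact (mul_le_mul h1.2 (hgb _) (abs_nonneg _) hA.le).trans (le_max_right _ _)
      · simp
    obtain ⟨α, h1, h2⟩ := hpl.exists_eq_forall_mem_Icc_hasDerivWithinAt₀
    exact ⟨α, h1, h2⟩
  choose α hα0 hα using hex
  refine ⟨fun d => ⟨fun t => (α d t).1, fun t => (α d t).2, ?_, ?_, ?_, ?_⟩, Real.exp K, ?_⟩
  · simp [hα0]
  · simp [hα0]
  · intro t ht
    exact (hα d t ht).fst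
  · intro t ht
    exact (hα d t ht).snd
  · intro d d' u w u' w' h h' t ht
    have hD : ∀ {d u w}, RS ψ g a d u w → ∀ t ∈ Icc (0:ℝ) 1,
        HasDerivWithinAt (fun t => (u t, w t)) (F t (u t, w t)) (Icc 0 1) t := by
      intro d u w h t ht
      exact (h.hu t ht).prodMk (h.hw t ht)
    have hr : ∀ {d u w}, RS ψ g a d u w → ∀ t ∈ Ico (0:ℝ) 1,
        HasDerivWithinAt (fun t => (u t, w t)) (F t (u t, w t)) (Ici t) t := by
      intro d u w h t ht
      exact (hD h t ⟨ht.1, ht.2.le⟩).mono_of_mem_nhdsWithin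
        (mem_of_superset (Icc_mem_nhdsGE ht.2) (Icc_subset_Icc ht.1 le_rfl))
    have := dist_le_of_trajectories_ODE_of_mem (K := K) (v := F) (s := fun _ => univ)
      (f := fun t => (u t, w t)) (g := fun t => (u' t, w' t)) (a := 0) (b := 1) (δ := |d - d'|)
      (fun t ht => (hFL t ⟨ht.1, ht.2.le⟩).lipschitzOnWith)
      (fun t ht => (hD h t ht).continuousWithinAt) (hr h) (fun _ _ => trivial)
      (fun t ht => (hD h' t ht).continuousWithinAt) (hr h') (fun _ _ => trivial)
      (by simp only [h.u0, h.w0, h'.u0, h'.w0]; rw [Prod.dist_eq]; simp [Real.dist_eq]) t ht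
    have h3 : dist (u t, w t) (u' t, w' t) ≤ Real.exp K * |d - d'| := by
      refine this.trans ?_
      rw [mul_comm]
      gcongr
      have := ht.2
      have hK0 := K.2
      nlinarith [K.2]
    constructor
    · rw [← Real.dist_eq]; exact (le_max_left _ _).trans h3
    · rw [← Real.dist_eq]; exact (le_max_right _ _).trans h3

section qual
variable {ψ g a u w : ℝ → ℝ} {d : ℝ}

theorem rs_mono (h : RS ψ g a d u w) (hψ0 : ∀ y, 0 ≤ ψ y) : MonotoneOn u (Icc 0 1) := by
  intro x hx y hy hxy
  have := mvt_ge h.hu (C := 0) hx.1 hxy hy.2 (fun t _ => hψ0 _)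
  linarith

theorem rs_frozen (h : RS ψ g a d u w) (hψn : ∀ y ≤ 0, ψ y = 0)
    (ha : ∀ t ∈ Icc (0:ℝ) 1, 0 < a t) {x y : ℝ} (hx : 0 ≤ x) (hxy : x ≤ y) (hy : y ≤ 1)
    (hw : ∀ t ∈ Ioo x y, w t ≤ 0) : u y = u x := by
  have hz : ∀ t ∈ Ioo x y, ψ (w t / a t) = 0 := fun t ht =>
    hψn _ (div_nonpos_of_nonpos_of_nonneg (hw t ht) (ha t ⟨hx.trans ht.1.le, ht.2.le.trans hy⟩).le)
  have h1 := mvt_ge h.hu (C := 0) hx hxy hy (fun t ht => (hz t ht).ge)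
  have h2 := mvt_le h.hu (C := 0) hx hxy hy (fun t ht => (hz t ht).le)
  linarith

theorem rs_wnonneg (h : RS ψ g a d u w) (hψn : ∀ y ≤ 0, ψ y = 0)
    (ha : ∀ t ∈ Icc (0:ℝ) 1, 0 < a t) (hw1 : 0 ≤ w 1) : ∀ t ∈ Icc (0:ℝ) 1, 0 ≤ w t := by
  intro t0 ht0
  by_contra hneg
  push Not at hneg
  have hc := cont_of h.hw
  obtain ⟨r1, ⟨hr1, hr1w⟩, hr1g⟩ : ∃ r, IsGreatest (Icc 0 t0 ∩ w ⁻¹' (Ici 0)) r := by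
    refine IsCompact.exists_isGreatest ?_ ⟨0, ⟨le_rfl, ht0.1⟩, by simp [h.w0]⟩
    exact isCompact_Icc.of_isClosed_subset
      ((hc.mono (Icc_subset_Icc le_rfl ht0.2)).preimage_isClosed_of_isClosed isClosed_Icc isClosed_Ici)
      inter_subset_left
  obtain ⟨r2, ⟨hr2, hr2w⟩, hr2g⟩ : ∃ r, IsLeast (Icc t0 1 ∩ w ⁻¹' (Ici 0)) r := by
    refine IsCompact.exists_isLeast ?_ ⟨1, ⟨ht0.2, le_rfl⟩, hw1⟩
    exact isCompact_Icc.of_isClosed_subset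
      ((hc.mono (Icc_subset_Icc ht0.1 le_rfl)).preimage_isClosed_of_isClosed isClosed_Icc isClosed_Ici)
      inter_subset_left
  simp only [mem_preimage, mem_Ici] at hr1w hr2w
  have hn1 : ∀ t, r1 < t → t ≤ t0 → w t < 0 := by
    intro t h1 h2
    by_contra hh
    push Not at hh
    have := hr1g ⟨⟨hr1.1.trans h1.le, h2⟩, hh⟩
    linarith
  have hn2 : ∀ t, t0 ≤ t → t < r2 → w t < 0 := by
    intro t h1 h2
    by_contra hh
    push Not at hh
    have := hr2g ⟨⟨h1, h2.le.trans hr2.2⟩, hh⟩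
    linarith
  have hlt1 : r1 < t0 := by
    rcases hr1.2.eq_or_lt with e | e
    · rw [e] at hr1w; linarith
    · exact e
  have hlt2 : t0 < r2 := by
    rcases hr2.1.eq_or_lt with e | e
    · rw [← e] at hr2w; linarith
    · exact e
  obtain ⟨c, hc1, e1⟩ := mvt_aux h.hw hr1.1 hlt1 ht0.2
  obtain ⟨c', hc1', e2⟩ := mvt_aux h.hw ht0.1 hlt2 hr2.2
  have f1 : u t0 = u c := rs_frozen h hψn ha (hr1.1.trans hc1.1.le) hc1.2.le ht0.2
    (fun t ht => (hn1 t (hc1.1.trans ht.1) ht.2.le).le)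
  have f2 : u c' = u t0 := rs_frozen h hψn ha ht0.1 hc1'.1.le (hc1'.2.le.trans hr2.2)
    (fun t ht => (hn2 t ht.1.le (ht.2.trans hc1'.2)).le)
  have ac := ha c ⟨hr1.1.trans hc1.1.le, hc1.2.le.trans ht0.2⟩
  have ac' := ha c' ⟨ht0.1.trans hc1'.1.le, hc1'.2.le.trans hr2.2⟩
  have g1 : g (u c) < 0 := by
    by_contra hh
    push Not at hh
    have : 0 ≤ a c * g (u c) * (t0 - r1) := mul_nonneg (mul_nonneg ac.le hh) (by linarith)
    linarith
  rw [f2, f1] at e2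
  have : a c' * g (u c) * (r2 - t0) ≤ 0 :=
    mul_nonpos_of_nonpos_of_nonneg (mul_nonpos_of_nonneg_of_nonpos ac'.le g1.le) (by linarith)
  linarith

theorem rs_wbound (h : RS ψ g a d u w) (hψ0 : ∀ y, 0 ≤ ψ y)
    (ha : ∀ t ∈ Icc (0:ℝ) 1, 0 < a t) (ham : MonotoneOn a (Icc 0 1)) {η T : ℝ} (hη : 0 ≤ η)
    (hg : ∀ s ∈ Icc d T, g s ≤ η) {r : ℝ} (hr : r ∈ Icc (0:ℝ) 1) (hu : u r ≤ T) :
    w r / a r ≤ η * r := by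
  have hm := rs_mono h hψ0
  rw [div_le_iff₀ (ha r hr)]
  have := mvt_le h.hw (x := 0) (y := r) (C := η * a r) le_rfl hr.1 hr.2 (by
    intro t ht
    have ht' : t ∈ Icc (0:ℝ) 1 := ⟨ht.1.le, ht.2.le.trans hr.2⟩
    have h1 : g (u t) ≤ η := by
      refine hg _ ⟨?_, (hm ht' hr ht.2.le).trans hu⟩
      rw [← h.u0]
      exact hm (by simp) ht' ht.1.le
    calc a t * g (u t) ≤ a t * η := by gcongr; exact (ha t ht').le
      _ ≤ a r * η := by gcongr; exact ham ht' hr ht.2.le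
      _ = _ := by ring)
  rw [h.w0] at this
  linarith

theorem rs_bound (h : RS ψ g a d u w) (hψ0 : ∀ y, 0 ≤ ψ y)
    (ha : ∀ t ∈ Icc (0:ℝ) 1, 0 < a t) (ham : MonotoneOn a (Icc 0 1)) {η T Ψ : ℝ} (hη : 0 ≤ η)
    (hg : ∀ s ∈ Icc d T, g s ≤ η) (hΨ : ∀ y ≤ η, ψ y ≤ Ψ) (hT : d + Ψ < T) :
    ∀ t ∈ Icc (0:ℝ) 1, u t ≤ T := by
  intro r hr
  have hm := rs_mono h hψ0
  have hΨ0 : 0 ≤ Ψ := (hψ0 η).trans (hΨ η le_rfl)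
  by_contra hlt
  push Not at hlt
  obtain ⟨s, hs, hsT⟩ : T ∈ u '' Icc 0 r :=
    intermediate_value_Icc hr.1 ((cont_of h.hu).mono (Icc_subset_Icc le_rfl hr.2))
      ⟨by rw [h.u0]; linarith, hlt.le⟩
  have hs1 : s ≤ 1 := hs.2.trans hr.2
  have := mvt_le h.hu (x := 0) (y := s) (C := Ψ) le_rfl hs.1 hs1 (by
    intro t ht
    have ht' : t ∈ Icc (0:ℝ) 1 := ⟨ht.1.le, ht.2.le.trans hs1⟩
    refine hΨ _ ((rs_wbound h hψ0 ha ham hη hg ht' ?_).trans (mul_le_of_le_one_right hη ht'.2))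
    rw [← hsT]
    exact hm ht' ⟨hs.1, hs1⟩ ht.2.le)
  rw [h.u0, hsT] at this
  nlinarith

theorem rs_rotate (h : RS ψ g a d u w) (hψ0 : ∀ y, 0 ≤ ψ y) (hψn : ∀ y ≤ 0, ψ y = 0)
    (ha : ∀ t ∈ Icc (0:ℝ) 1, 0 < a t) (ham : MonotoneOn a (Icc 0 1))
    {η u0 δ0 Ψ K m b A : ℝ} (hη : 0 ≤ η) (hd : d < u0) (hdδ : u0 - δ0 ≤ d)
    (hΨ : ∀ y ≤ η, ψ y ≤ Ψ) (hΨδ : Ψ ≤ δ0)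
    (hgη : ∀ s ∈ Icc d (u0 + δ0), g s ≤ η)
    (hm : 0 < m) (hg1 : ∀ s ∈ Icc (u0 - δ0) u0, m * (u0 - s) ≤ g s)
    (hg2 : ∀ s ∈ Icc u0 (u0 + δ0), g s ≤ - (m * (s - u0)))
    (hK : 0 < K) (hψK : ∀ y ∈ Icc 0 η, K * y ≤ ψ y)
    (hab : ∀ t ∈ Icc (1/8:ℝ) 1, b ≤ a t) (haA : ∀ t ∈ Icc (0:ℝ) 1, a t ≤ A)
    (hKA : 64 * A ≤ K * b * m) : w 1 < 0 := by
  by_contra hw1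
  push Not at hw1
  have hmon := rs_mono h hψ0
  have hwn := rs_wnonneg h hψn ha hw1
  have hub := rs_bound h hψ0 ha ham hη hgη hΨ (by linarith)
  have hA : 0 < A := (ha 1 (by simp)).trans_le (haA 1 (by simp))
  have hdu : ∀ t ∈ Icc (0:ℝ) 1, d ≤ u t := by
    intro t ht
    rw [← h.u0]
    exact hmon (by simp) ht ht.1
  -- lower bound on u'
  have key : ∀ t ∈ Icc (0:ℝ) 1, ∀ c, c ≤ w t → K / A * c ≤ ψ (w t / a t) := by
    intro t ht c hc
    have y1 : w t / a t ≤ η :=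
      (rs_wbound h hψ0 ha ham hη hgη ht (hub t ht)).trans (mul_le_of_le_one_right hη ht.2)
    have y0 : 0 ≤ w t / a t := div_nonneg (hwn t ht) (ha t ht).le
    refine le_trans ?_ (hψK _ ⟨y0, y1⟩)
    rw [div_mul_eq_mul_div, mul_div_assoc]
    have : c / A ≤ w t / a t := by
      calc c / A ≤ w t / A := by gcongr
        _ ≤ w t / a t := by
          have := hwn t ht
          have := ha t ht
          have := haA t ht
          gcongr
    gcongr
  have I14 : (1/4:ℝ) ∈ Icc (0:ℝ) 1 := by constructor <;> norm_num
  have I12 : (1/2:ℝ) ∈ Icc (0:ℝ) 1 := by constructor <;> norm_num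
  have I34 : (3/4:ℝ) ∈ Icc (0:ℝ) 1 := by constructor <;> norm_num
  -- phase 1
  have P1 : u0 < u (1/2) := by
    by_contra hle
    push Not at hle
    have hgpos : ∀ t ∈ Icc (0:ℝ) (1/2), m * (u0 - u t) ≤ g (u t) ∧ u t ≤ u0 := by
      intro t ht
      have ht' : t ∈ Icc (0:ℝ) 1 := ⟨ht.1, ht.2.trans (by norm_num)⟩
      have := hmon ht' I12 ht.2
      have h2 := hdu t ht'
      exact ⟨hg1 _ ⟨by linarith, by linarith⟩, by linarith⟩
    have hwm : ∀ x y, 0 ≤ x → x ≤ y → y ≤ 1/2 → w x ≤ w y := by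
      intro x y hx hxy hy
      have := mvt_ge h.hw (C := 0) hx hxy (by linarith) (by
        intro t ht
        obtain ⟨q1, q2⟩ := hgpos t ⟨by linarith [ht.1], by linarith [ht.2]⟩
        have := ha t ⟨by linarith [ht.1], by linarith [ht.2]⟩
        have : 0 ≤ m * (u0 - u t) := mul_nonneg hm.le (by linarith)
        exact mul_nonneg (by linarith) (by linarith))
      linarith
    obtain ⟨_, hv⟩ := hgpos (1/4) ⟨by norm_num, by norm_num⟩
    have s1 := mvt_ge h.hw (x := 1/8) (y := 1/4) (C := b * (m * (u0 - u (1/4)))) (by norm_num)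
      (by norm_num) (by norm_num) (by
        intro t ht
        have ht' : t ∈ Icc (0:ℝ) 1 := ⟨by linarith [ht.1], by linarith [ht.2]⟩
        obtain ⟨q1, q2⟩ := hgpos t ⟨by linarith [ht.1], by linarith [ht.2]⟩
        have q3 := hmon ht' I14 ht.2.le
        have q4 : m * (u0 - u (1/4)) ≤ m * (u0 - u t) := by gcongr
        have q5 : 0 ≤ m * (u0 - u (1/4)) := mul_nonneg hm.le (by linarith)
        exact mul_le_mul (hab t ⟨ht.1.le, by linarith [ht.2]⟩) (by linarith) q5 (ha t ht').le)
    have s2 := hwn (1/8) ⟨by norm_num, by norm_num⟩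
    have s3 := mvt_ge h.hu (x := 1/4) (y := 1/2) (C := K / A * w (1/4)) (by norm_num)
      (by norm_num) (by norm_num) (by
        intro t ht
        exact key t ⟨by linarith [ht.1], by linarith [ht.2]⟩ _
          (hwm _ _ (by norm_num) ht.1.le ht.2.le))
    set V := u0 - u (1/4) with hV
    have s4 : b * (m * V) / 8 ≤ w (1/4) := by linarith
    have hKA0 : 0 < K / A := div_pos hK hA
    have s5 : K / A * (b * (m * V) / 8) ≤ K / A * w (1/4) := by gcongr
    have s6 : 64 ≤ K * b * m / A := by rw [le_div_iff₀ hA]; linarith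
    have s7 : K / A * (b * (m * V) / 8) = K * b * m / A * V / 8 := by ring
    have hV0 : 0 ≤ V := by linarith
    have s8 : 64 * V ≤ K * b * m / A * V := by gcongr
    have hVz : V = 0 := by linarith
    have hw14 : w (1/4) ≤ 0 := by
      by_contra hh
      push Not at hh
      have := mul_pos hKA0 hh
      linarith
    have := rs_frozen h hψn ha (x := 0) (y := 1/4) le_rfl (by norm_num) (by norm_num)
      (fun t ht => (hwm t (1/4) ht.1.le ht.2.le (by norm_num)).trans hw14)
    rw [h.u0] at this
    linarith
  -- phase 2
  have hgneg : ∀ t ∈ Icc (1/2:ℝ) 1, g (u t) ≤ - (m * (u t - u0)) ∧ u0 < u t := by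
    intro t ht
    have ht' : t ∈ Icc (0:ℝ) 1 := ⟨by linarith [ht.1], ht.2⟩
    have := hmon I12 ht' ht.1
    exact ⟨hg2 _ ⟨by linarith, hub t ht'⟩, by linarith⟩
  have hwm : ∀ x y, 1/2 ≤ x → x ≤ y → y ≤ 1 → w y ≤ w x := by
    intro x y hx hxy hy
    have := mvt_le h.hw (C := 0) (by linarith) hxy hy (by
      intro t ht
      obtain ⟨q1, q2⟩ := hgneg t ⟨by linarith [ht.1], by linarith [ht.2]⟩
      have := ha t ⟨by linarith [ht.1], by linarith [ht.2]⟩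
      have : 0 ≤ m * (u t - u0) := mul_nonneg hm.le (by linarith)
      exact mul_nonpos_of_nonneg_of_nonpos (by linarith) (by linarith))
    linarith
  have s1 := mvt_le h.hw (x := 3/4) (y := 1) (C := -(b * (m * (u (3/4) - u0)))) (by norm_num)
    (by norm_num) (by norm_num) (by
      intro t ht
      have ht' : t ∈ Icc (0:ℝ) 1 := ⟨by linarith [ht.1], by linarith [ht.2]⟩
      obtain ⟨q1, q2⟩ := hgneg t ⟨by linarith [ht.1], by linarith [ht.2]⟩
      obtain ⟨q1', q2'⟩ := hgneg (3/4) ⟨by norm_num, by norm_num⟩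
      have q3 := hmon I34 ht' ht.1.le
      have q4 : m * (u (3/4) - u0) ≤ m * (u t - u0) := by gcongr
      have q5 : 0 ≤ m * (u (3/4) - u0) := mul_nonneg hm.le (by linarith)
      have := mul_le_mul (hab t ⟨by linarith [ht.1], by linarith [ht.2]⟩)
        (show m * (u (3/4) - u0) ≤ - g (u t) by linarith) q5 (ha t ht').le
      linarith)
  have s3 := mvt_ge h.hu (x := 1/2) (y := 3/4) (C := K / A * w (3/4)) (by norm_num)
    (by norm_num) (by norm_num) (by
      intro t ht
      exact key t ⟨by linarith [ht.1], by linarith [ht.2]⟩ _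
        (hwm _ _ ht.1.le ht.2.le (by norm_num)))
  obtain ⟨_, hv⟩ := hgneg (3/4) ⟨by norm_num, by norm_num⟩
  set V := u (3/4) - u0 with hV
  have s4 : b * (m * V) / 4 ≤ w (3/4) := by linarith
  have hKA0 : 0 < K / A := div_pos hK hA
  have s5 : K / A * (b * (m * V) / 4) ≤ K / A * w (3/4) := by gcongr
  have s6 : 64 ≤ K * b * m / A := by rw [le_div_iff₀ hA]; linarith
  have s7 : K / A * (b * (m * V) / 4) = K * b * m / A * V / 4 := by ring
  have hV0 : 0 < V := by linarith
  have s8 : 64 * V ≤ K * b * m / A * V := by gcongr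
  linarith

end qual

theorem rs_shoot {ψ g a : ℝ → ℝ} {Kψ Kg : ℝ≥0} {Mψ Mg amin A um u0 ds : ℝ}
    (hψ : LipschitzWith Kψ ψ)
    (hg : LipschitzWith Kg g) (hψb : ∀ y, |ψ y| ≤ Mψ) (hgb : ∀ y, |g y| ≤ Mg) (hamin : 0 < amin)
    (hac : ContinuousOn a (Icc 0 1)) (ha : ∀ t ∈ Icc (0:ℝ) 1, amin ≤ a t ∧ a t ≤ A)
    (hψ0 : ∀ y, 0 ≤ ψ y) (hψn : ∀ y ≤ 0, ψ y = 0)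
    (hum : g um = 0) (hds : um < ds) (hds0 : ds < u0) (hgp : ∀ s ∈ Ioo um u0, 0 < g s)
    (hrot : ∀ u w, RS ψ g a ds u w → w 1 < 0) :
    ∃ d u w, d ∈ Icc um ds ∧ RS ψ g a d u w ∧ w 1 = 0 ∧ u0 ≤ u 1 := by
  obtain ⟨hex, L, hL⟩ := rs_exists hψ hg hψb hgb hamin hac ha
  have ha0 : ∀ t ∈ Icc (0:ℝ) 1, 0 < a t := fun t ht => hamin.trans_le (ha t ht).1
  choose U W hUW using hex
  have I0 : (0:ℝ) ∈ Icc (0:ℝ) 1 := by simp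
  have I1 : (1:ℝ) ∈ Icc (0:ℝ) 1 := by simp
  -- positivity
  have hpos : ∀ d, um < d → U d 1 < u0 → 0 < W d 1 := by
    intro d hd h1
    have hm := rs_mono (hUW d) hψ0
    obtain ⟨c, hc, e⟩ := mvt_aux (hUW d).hw le_rfl zero_lt_one le_rfl
    have hc' : c ∈ Icc (0:ℝ) 1 := ⟨hc.1.le, hc.2.le⟩
    rw [(hUW d).w0] at e
    have h2 := hm I0 hc' hc.1.le
    have h3 := hm hc' I1 hc.2.le
    rw [(hUW d).u0] at h2
    have := mul_pos (ha0 c hc') (hgp (U d c) ⟨by linarith, by linarith⟩)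
    linarith
  have hconst : RS ψ g a um (fun _ => um) (fun _ => 0) := by
    refine ⟨rfl, rfl, fun t ht => ?_, fun t ht => ?_⟩
    · simp only [zero_div, hψn 0 le_rfl]
      exact hasDerivWithinAt_const _ _ _
    · simp only [hum, mul_zero]
      exact hasDerivWithinAt_const _ _ _
  obtain ⟨d1, hd1, hd1'⟩ : ∃ d1, d1 ∈ Ioo um ds ∧ L * |d1 - um| < u0 - um := by
    have hcont : Tendsto (fun d => L * |d - um|) (𝓝[>] um) (𝓝 0) := by
      have : Continuous (fun d => L * |d - um|) := by fun_prop
      have := this.tendsto um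
      simp only [sub_self, abs_zero, mul_zero] at this
      exact this.mono_left nhdsWithin_le_nhds
    have e1 := hcont.eventually (gt_mem_nhds (show (0:ℝ) < u0 - um by linarith))
    have e2 : ∀ᶠ d in 𝓝[>] um, d ∈ Ioo um ds := Ioo_mem_nhdsGT hds
    obtain ⟨d, h1, h2⟩ := (e2.and e1).exists
    exact ⟨d, h1, h2⟩
  have hW1 : 0 < W d1 1 := by
    refine hpos d1 hd1.1 ?_
    have := (hL _ _ _ _ _ _ (hUW d1) hconst 1 I1).1
    have := (abs_le.1 this).2
    linarith
  have hWc : Continuous (fun d => W d 1) := by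
    refine (LipschitzWith.of_dist_le_mul (K := Real.toNNReal |L|) fun d d' => ?_).continuous
    rw [Real.dist_eq, Real.dist_eq, Real.coe_toNNReal _ (abs_nonneg _)]
    refine ((hL _ _ _ _ _ _ (hUW d) (hUW d') 1 I1).2).trans ?_
    gcongr
    exact le_abs_self L
  obtain ⟨d, hd, hd0⟩ : (0:ℝ) ∈ (fun d => W d 1) '' Icc d1 ds :=
    intermediate_value_Icc' hd1.2.le hWc.continuousOn ⟨(hrot _ _ (hUW ds)).le, hW1.le⟩
  refine ⟨d, U d, W d, ⟨by linarith [hd1.1, hd.1], hd.2⟩, hUW d, hd0, ?_⟩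
  by_contra hh
  push Not at hh
  have := hpos d (by linarith [hd1.1, hd.1]) hh
  simp only at hd0
  linarith

noncomputable def psi (q Y ε y : ℝ) : ℝ := (min (max y 0) Y + ε) ^ q - ε ^ q

section psi
variable {q Y ε : ℝ}

theorem psi_aux (hY : 0 ≤ Y) (y : ℝ) : 0 ≤ min (max y 0) Y := le_min (le_max_right _ _) hY

theorem psi_nonneg (hq : 0 < q) (hY : 0 ≤ Y) (hε : 0 < ε) (y : ℝ) : 0 ≤ psi q Y ε y := by
  unfold psi
  have := Real.rpow_le_rpow hε.le (show ε ≤ min (max y 0) Y + ε by linarith [psi_aux hY y]) hq.le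
  linarith

theorem psi_zero (hY : 0 ≤ Y) {y : ℝ} (hy : y ≤ 0) : psi q Y ε y = 0 := by
  unfold psi
  rw [max_eq_right hy, min_eq_left hY]
  simp

theorem psi_le (hq : 0 < q) (hY : 0 ≤ Y) (hε : 0 < ε) {η y : ℝ} (hη : 0 ≤ η) (hy : y ≤ η) :
    psi q Y ε y ≤ (η + ε) ^ q := by
  unfold psi
  have h1 : 0 ≤ ε ^ q := Real.rpow_nonneg hε.le _
  have h2 : min (max y 0) Y ≤ η := (min_le_left _ _).trans (max_le hy hη)
  have := Real.rpow_le_rpow (by linarith [psi_aux hY y])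
    (show min (max y 0) Y + ε ≤ η + ε by linarith) hq.le
  linarith

theorem psi_bdd (hq : 0 < q) (hY : 0 ≤ Y) (hε : 0 < ε) (hε1 : ε ≤ 1) (y : ℝ) :
    psi q Y ε y ≤ (Y + 1) ^ q := by
  unfold psi
  have h1 : 0 ≤ ε ^ q := Real.rpow_nonneg hε.le _
  have h2 : min (max y 0) Y ≤ Y := min_le_right _ _
  have := Real.rpow_le_rpow (by linarith [psi_aux hY y])
    (show min (max y 0) Y + ε ≤ Y + 1 by linarith) hq.le
  linarith

theorem psi_lip (hq : 0 < q) (hq1 : q < 1) (hY : 0 ≤ Y) (hε : 0 < ε) :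
    ∃ K : ℝ≥0, LipschitzWith K (psi q Y ε) := by
  let K : ℝ≥0 := ⟨q * ε ^ (q - 1), by positivity⟩
  have h1 : LipschitzOnWith K (fun x : ℝ => x ^ q) (Ici ε) := by
    refine (convex_Ici ε).lipschitzOnWith_of_nnnorm_hasDerivWithin_le
      (f' := fun x => q * x ^ (q - 1)) (fun x hx => ?_) (fun x hx => ?_)
    · exact (Real.hasDerivAt_rpow_const (Or.inl (hε.trans_le hx).ne')).hasDerivWithinAt
    · have hx0 : 0 < x := hε.trans_le hx
      rw [← NNReal.coe_le_coe, coe_nnnorm, Real.norm_of_nonneg (by positivity)]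
      show q * x ^ (q - 1) ≤ q * ε ^ (q - 1)
      exact mul_le_mul_of_nonneg_left
        (Real.rpow_le_rpow_of_nonpos hε hx (by linarith)) hq.le
  have h2 : LipschitzWith 1 (fun y : ℝ => min (max y 0) Y + ε) := by
    have : LipschitzWith 1 (fun y : ℝ => min (max y 0) Y) :=
      (LipschitzWith.id.max_const 0).min_const Y
    refine LipschitzWith.of_dist_le_mul fun x y => ?_
    have := this.dist_le_mul x y
    rw [Real.dist_eq] at *
    simpa using this
  refine ⟨K, LipschitzWith.of_dist_le_mul fun x y => ?_⟩
  have m1 : ∀ y, min (max y 0) Y + ε ∈ Ici ε := fun y => by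
    have := psi_aux hY y
    simp only [mem_Ici]; linarith
  have e1 := h1.dist_le_mul _ (m1 x) _ (m1 y)
  have e2 := h2.dist_le_mul x y
  unfold psi
  rw [dist_sub_right]
  refine e1.trans ?_
  have := K.2
  gcongr
  simpa using e2

theorem psi_lower (hq : 0 < q) (hq1 : q < 1) (hε : 0 < ε) {η y : ℝ}
    (hεη : ε ≤ η) (hηY : η ≤ Y) (hy : y ∈ Icc 0 η) :
    q * (2 * η) ^ (q - 1) * y ≤ psi q Y ε y := by
  unfold psi
  rw [max_eq_left hy.1, min_eq_left (hy.2.trans hηY)]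
  rcases hy.1.eq_or_lt with e | hpos
  · rw [← e]; simp
  obtain ⟨c, hc, e⟩ := exists_hasDerivAt_eq_slope (fun x : ℝ => x ^ q) (fun x => q * x ^ (q - 1))
    (show ε < y + ε by linarith)
    (fun x hx => (Real.hasDerivAt_rpow_const
      (Or.inl (hε.trans_le hx.1).ne')).continuousAt.continuousWithinAt)
    (fun x hx => Real.hasDerivAt_rpow_const (Or.inl (hε.trans hx.1).ne'))
  rw [eq_div_iff (by linarith)] at e
  rw [← e, add_sub_cancel_right]
  have := Real.rpow_le_rpow_of_nonpos (hε.trans hc.1) (show c ≤ 2 * η by linarith [hc.2, hy.2])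
    (show q - 1 ≤ 0 by linarith)
  gcongr

end psi

theorem approx {q : ℝ} (hq : 0 < q) (hq1 : q < 1) (m : ℕ) {g : ℝ → ℝ} {Kg : ℝ≥0}
    {Mg C um u0 δ0 mm : ℝ}
    (hg : LipschitzWith Kg g) (hgb : ∀ y, |g y| ≤ Mg) (hC : 0 ≤ C) 
    (hum : g um = 0) (humu : um < u0) (hgp : ∀ s ∈ Ioo um u0, 0 < g s)
    (hδ0 : 0 < δ0) (hmm : 0 < mm) (hg1 : ∀ s ∈ Icc (u0 - δ0) u0, mm * (u0 - s) ≤ g s)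
    (hg2 : ∀ s ∈ Icc u0 (u0 + δ0), g s ≤ - (mm * (s - u0))) :
    ∃ ds ∈ Ioo um u0, ∃ ε0 > 0, ε0 ≤ 1 ∧ ∀ ε ∈ Ioc 0 ε0, ∃ d u w, d ∈ Icc um ds ∧
      RS (psi q (C + 1) ε) g (fun t => (t + ε) ^ m) d u w ∧ w 1 = 0 ∧ u0 ≤ u 1 := by
  set A : ℝ := 2 ^ m with hA
  set b : ℝ := (1 / 8) ^ m with hb
  have hA0 : 0 < A := by positivity
  have hb0 : 0 < b := by positivity
  set K : ℝ := 64 * A / (b * mm) with hK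
  have hK0 : 0 < K := by positivity
  have hY : (0:ℝ) ≤ C + 1 := by linarith
  obtain ⟨η, hη0, hη1, hη2, hη3⟩ : ∃ η : ℝ, 0 < η ∧ η ≤ C + 1 ∧ (2 * η) ^ q ≤ δ0 ∧
      K ≤ q * (2 * η) ^ (q - 1) := by
    have t0 : Tendsto (fun η : ℝ => 2 * η) (𝓝[>] 0) (𝓝[>] 0) := by
      refine tendsto_nhdsWithin_iff.2 ⟨?_, ?_⟩
      · have : Continuous (fun η : ℝ => 2 * η) := by fun_prop
        have := this.tendsto 0
        rw [mul_zero] at this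
        exact this.mono_left nhdsWithin_le_nhds
      · filter_upwards [self_mem_nhdsWithin] with x hx
        simp only [mem_Ioi] at *; linarith
    have t1 : Tendsto (fun η : ℝ => (2 * η) ^ q) (𝓝[>] 0) (𝓝 0) := by
      have : Continuous (fun η : ℝ => (2 * η) ^ q) :=
        (continuous_const.mul continuous_id).rpow_const (fun _ => Or.inr hq.le)
      have := this.tendsto 0
      rw [mul_zero, Real.zero_rpow hq.ne'] at this
      exact this.mono_left nhdsWithin_le_nhds
    have t2 : Tendsto (fun η : ℝ => q * (2 * η) ^ (q - 1)) (𝓝[>] 0) atTop :=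
      ((tendsto_rpow_neg_nhdsGT_zero (show q - 1 < 0 by linarith)).comp t0).const_mul_atTop hq
    have e1 := t1.eventually (ge_mem_nhds hδ0)
    have e2 := t2.eventually (eventually_ge_atTop K)
    have e3 : ∀ᶠ η : ℝ in 𝓝[>] 0, η ∈ Ioo 0 (C + 1) := Ioo_mem_nhdsGT (by linarith)
    obtain ⟨η, h1, h2, h3⟩ := (e1.and (e2.and e3)).exists
    exact ⟨η, h3.1, h3.2.le, h1, h2⟩
  have hgu0 : g u0 = 0 := by
    have h1 := hg1 u0 ⟨by linarith, le_rfl⟩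
    have h2 := hg2 u0 ⟨le_rfl, by linarith⟩
    simp at h1 h2
    linarith
  obtain ⟨ρ, hρ, hρg⟩ : ∃ ρ > 0, ∀ s, |s - u0| < ρ → g s < η := by
    have := hg.continuous.continuousAt.eventually (gt_mem_nhds (show g u0 < η by rw [hgu0]; exact hη0))
    obtain ⟨ρ, h1, h2⟩ := Metric.eventually_nhds_iff.1 this
    exact ⟨ρ, h1, fun s hs => h2 (by rwa [Real.dist_eq])⟩
  obtain ⟨ds, hds1, hds2⟩ := exists_between
    (show max um (max (u0 - δ0) (u0 - ρ)) < u0 from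
      max_lt humu (max_lt (by linarith) (by linarith)))
  simp only [max_lt_iff] at hds1
  obtain ⟨hd1, hd2, hd3⟩ := hds1
  refine ⟨ds, ⟨hd1, hds2⟩, min η 1, by positivity, min_le_right _ _, fun ε hε => ?_⟩
  have hε0 : 0 < ε := hε.1
  have hεη : ε ≤ η := hε.2.trans (min_le_left _ _)
  have hε1 : ε ≤ 1 := hε.2.trans (min_le_right _ _)
  obtain ⟨Kψ, hKψ⟩ := psi_lip hq hq1 hY hε0
  have haA : ∀ t ∈ Icc (0:ℝ) 1, (t + ε) ^ m ≤ A := fun t ht =>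
    pow_le_pow_left₀ (by linarith [ht.1]) (by linarith [ht.2]) m
  refine rs_shoot hKψ hg (Mψ := (C + 1 + 1) ^ q) ?_ hgb (amin := ε ^ m) (A := A) (by positivity)
    (by fun_prop) ?_ (psi_nonneg hq hY hε0) (fun y hy => psi_zero hY hy) hum hd1 hds2 hgp ?_
  · intro y
    rw [abs_of_nonneg (psi_nonneg hq hY hε0 y)]
    exact psi_bdd hq hY hε0 hε1 y
  · intro t ht
    exact ⟨pow_le_pow_left₀ hε0.le (by linarith [ht.1]) m, haA t ht⟩
  · intro u w h
    refine rs_rotate h (psi_nonneg hq hY hε0) (fun y hy => psi_zero hY hy) ?_ ?_ (η := η)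
      (u0 := u0) (δ0 := δ0) (Ψ := (2 * η) ^ q) (K := K) (m := mm) (b := b) (A := A) hη0.le hds2 hd2.le
      ?_ hη2 ?_ hmm hg1 hg2 hK0 ?_ ?_ haA ?_
    · intro t ht
      have := ht.1
      positivity
    · intro x hx y hy hxy
      exact pow_le_pow_left₀ (by linarith [hx.1]) (by linarith) m
    · intro y hy
      refine (psi_le hq hY hε0 hη0.le hy).trans ?_
      exact Real.rpow_le_rpow (by linarith) (by linarith) hq.le
    · intro s hs
      rcases le_total s u0 with h1 | h1
      · refine (hρg s ?_).le
        rw [abs_lt]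
        constructor <;> linarith [hs.1]
      · refine (hg2 s ⟨h1, hs.2⟩).trans ?_
        have : 0 ≤ mm * (s - u0) := mul_nonneg hmm.le (by linarith)
        linarith
    · intro y hy
      refine le_trans ?_ (psi_lower hq hq1 hε0 hεη hη1 hy)
      have := hy.1
      gcongr
    · intro t ht
      exact pow_le_pow_left₀ (by norm_num) (by linarith [ht.1]) m
    · rw [hK]
      apply le_of_eq
      field_simp

theorem ftc_aux {f f' : ℝ → ℝ} (h : ∀ t ∈ Icc (0:ℝ) 1, HasDerivWithinAt f (f' t) (Icc 0 1) t)
    (hc : ContinuousOn f' (Icc 0 1)) {r : ℝ} (hr : r ∈ Icc (0:ℝ) 1) :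
    ∫ s in (0:ℝ)..r, f' s = f r - f 0 := by
  refine intervalIntegral.integral_eq_sub_of_hasDerivAt_of_le hr.1
    ((cont_of h).mono (Icc_subset_Icc le_rfl hr.2))
    (fun t ht => (h t ⟨ht.1.le, ht.2.le.trans hr.2⟩).hasDerivAt
      (Icc_mem_nhds ht.1 (ht.2.trans_le hr.2))) ?_
  refine ContinuousOn.intervalIntegrable ?_
  rw [uIcc_of_le hr.1]
  exact hc.mono (Icc_subset_Icc le_rfl hr.2)

theorem dct_aux {F : ℕ → ℝ → ℝ} {f : ℝ → ℝ} {M : ℝ} (hF : ∀ k, ContinuousOn (F k) (Icc 0 1))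
    (hb : ∀ k, ∀ s ∈ Icc (0:ℝ) 1, |F k s| ≤ M)
    (hl : ∀ s ∈ Ioc (0:ℝ) 1, Tendsto (fun k => F k s) atTop (𝓝 (f s))) {r : ℝ}
    (hr : r ∈ Icc (0:ℝ) 1) :
    Tendsto (fun k => ∫ s in (0:ℝ)..r, F k s) atTop (𝓝 (∫ s in (0:ℝ)..r, f s)) := by
  have hsub : Set.uIoc 0 r ⊆ Ioc 0 1 := by
    rw [uIoc_of_le hr.1]; exact Ioc_subset_Ioc le_rfl hr.2
  refine intervalIntegral.tendsto_integral_filter_of_dominated_convergence (fun _ => M) ?_ ?_ ?_ ?_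
  · refine Eventually.of_forall fun k => ?_
    refine ContinuousOn.aestronglyMeasurable ?_ measurableSet_uIoc
    exact (hF k).mono (hsub.trans Ioc_subset_Icc_self)
  · refine Eventually.of_forall fun k => Eventually.of_forall fun s hs => ?_
    exact hb k s (Ioc_subset_Icc_self (hsub hs))
  · simp
  · exact Eventually.of_forall fun s hs => hl s (hsub hs)

theorem compact_aux {u : ℕ → ℝ → ℝ} {M lo hi : ℝ} (hM : 0 ≤ M)
    (hl : ∀ k, ∀ s ∈ Icc (0:ℝ) 1, u k s ∈ Icc lo hi)
    (hL : ∀ k, ∀ s ∈ Icc (0:ℝ) 1, ∀ t ∈ Icc (0:ℝ) 1, |u k s - u k t| ≤ M * |s - t|) :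
    ∃ v : ℝ → ℝ, Continuous v ∧ ∃ φ : ℕ → ℕ, StrictMono φ ∧
      ∀ s ∈ Icc (0:ℝ) 1, Tendsto (fun k => u (φ k) s) atTop (𝓝 (v s)) := by
  have hlip : ∀ k, LipschitzWith M.toNNReal (fun x : Icc (0:ℝ) 1 => u k x) := by
    intro k
    refine LipschitzWith.of_dist_le_mul fun x y => ?_
    rw [Real.dist_eq, Subtype.dist_eq, Real.dist_eq, Real.coe_toNNReal _ hM]
    exact hL k x x.2 y y.2
  let V : ℕ → BoundedContinuousFunction (Icc (0:ℝ) 1) ℝ := fun k =>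
    BoundedContinuousFunction.mkOfCompact ⟨fun x : Icc (0:ℝ) 1 => u k x, (hlip k).continuous⟩
  have hV : ∀ k x, V k x = u k x := fun _ _ => rfl
  have hcomp : IsCompact (closure (range V)) := by
    refine BoundedContinuousFunction.arzela_ascoli (Icc lo hi) isCompact_Icc _ ?_ ?_
    · rintro f x ⟨k, rfl⟩
      exact hl k x x.2
    · refine Metric.equicontinuous_of_continuity_modulus (fun x => M * x) ?_ _ ?_
      · have : Continuous (fun x => M * x) := by fun_prop
        have := this.tendsto 0
        rwa [mul_zero] at this
      · rintro x y ⟨f, k, rfl⟩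
        have := (hlip k).dist_le_mul x y
        rw [Real.coe_toNNReal _ hM] at this
        exact this
  obtain ⟨f, _, φ, hφ, hlim⟩ := hcomp.tendsto_subseq (fun k => subset_closure (mem_range_self (f := V) k))
  refine ⟨IccExtend zero_le_one f, f.continuous.Icc_extend', φ, hφ, fun s hs => ?_⟩
  rw [IccExtend_of_mem _ _ hs]
  exact ((continuous_eval_const (F := BoundedContinuousFunction (Icc (0:ℝ) 1) ℝ) (⟨s, hs⟩ : Icc (0:ℝ) 1)).tendsto f).comp hlim

theorem core {q : ℝ} (hq : 0 < q) (hq1 : q < 1) (m : ℕ) {g : ℝ → ℝ} {Kg : ℝ≥0}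
    {Mg C um u0 δ0 mm : ℝ}
    (hg : LipschitzWith Kg g) (hgb : ∀ y, |g y| ≤ Mg) (hC : 0 ≤ C) (hgC : ∀ s, g s ≤ C)
    (hum : g um = 0) (humu : um < u0) (hgp : ∀ s ∈ Ioo um u0, 0 < g s)
    (hδ0 : 0 < δ0) (hmm : 0 < mm) (hg1 : ∀ s ∈ Icc (u0 - δ0) u0, mm * (u0 - s) ≤ g s)
    (hg2 : ∀ s ∈ Icc u0 (u0 + δ0), g s ≤ - (mm * (s - u0))) :
    ∃ u w : ℝ → ℝ, Continuous u ∧ MonotoneOn u (Icc 0 1) ∧ u 0 ∈ Ico um u0 ∧ u0 ≤ u 1 ∧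
      (w = fun r => ∫ s in (0:ℝ)..r, s ^ m * g (u s)) ∧
      (∀ r ∈ Icc (0:ℝ) 1, 0 ≤ w r ∧ w r ≤ C * r * r ^ m) ∧ w 1 = 0 ∧
      ∀ r ∈ Icc (0:ℝ) 1, u r = u 0 + ∫ s in (0:ℝ)..r, (w s / s ^ m) ^ q := by
  obtain ⟨ds, hds, ε0, hε0, hε01, H⟩ :=
    approx hq hq1 m hg hgb hC hum humu hgp hδ0 hmm hg1 hg2
  have hY : (0:ℝ) ≤ C + 1 := by linarith
  set ε : ℕ → ℝ := fun k => ε0 / (k + 1) with hεdef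
  have hε : ∀ k, ε k ∈ Ioc 0 ε0 := fun k => ⟨by positivity, by
    rw [hεdef]; simp only
    apply div_le_self hε0.le
    have : (0:ℝ) ≤ k := by positivity
    linarith⟩
  have hεpos : ∀ k, 0 < ε k := fun k => (hε k).1
  have hε1 : ∀ k, ε k ≤ 1 := fun k => (hε k).2.trans hε01
  have hεlim : Tendsto ε atTop (𝓝 0) := by
    have := (tendsto_one_div_add_atTop_nhds_zero_nat (𝕜 := ℝ)).const_mul ε0
    simpa [hεdef, div_eq_mul_inv] using this
  choose d u w hd hRS hw1 hu1 using fun k => H (ε k) (hε k)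
  set Mψ : ℝ := (C + 1 + 1) ^ q with hMψ
  have hMψ0 : 0 ≤ Mψ := by positivity
  have hψ0 : ∀ k y, 0 ≤ psi q (C + 1) (ε k) y := fun k => psi_nonneg hq hY (hεpos k)
  have hψM : ∀ k y, psi q (C + 1) (ε k) y ≤ Mψ := fun k => psi_bdd hq hY (hεpos k) (hε1 k)
  have hmon : ∀ k, MonotoneOn (u k) (Icc 0 1) := fun k => rs_mono (hRS k) (hψ0 k)
  have hapos : ∀ k, ∀ t ∈ Icc (0:ℝ) 1, 0 < (t + ε k) ^ m := fun k t ht => by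
    have := ht.1
    have := hεpos k
    positivity
  have hwn : ∀ k, ∀ t ∈ Icc (0:ℝ) 1, 0 ≤ w k t := fun k =>
    rs_wnonneg (hRS k) (fun y hy => psi_zero hY hy) (hapos k) (hw1 k).ge
  have hwb : ∀ k, ∀ t ∈ Icc (0:ℝ) 1, w k t / (t + ε k) ^ m ≤ C * t := fun k t ht =>
    rs_wbound (hRS k) (hψ0 k) (hapos k) (fun x hx y hy hxy =>
      pow_le_pow_left₀ (by linarith [hx.1, hεpos k]) (by linarith) m) hC
      (fun s _ => hgC s) ht le_rfl
  have huL : ∀ k, ∀ s ∈ Icc (0:ℝ) 1, ∀ t ∈ Icc (0:ℝ) 1, s ≤ t → |u k s - u k t| ≤ Mψ * |s - t| := by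
    intro k s hs t ht hst
    have h1 := mvt_le (hRS k).hu (C := Mψ) hs.1 hst ht.2 (fun x _ => hψM k _)
    have h2 := hmon k hs ht hst
    rw [abs_sub_comm, abs_of_nonneg (by linarith), abs_sub_comm s, abs_of_nonneg (by linarith)]
    exact h1
  have huL' : ∀ k, ∀ s ∈ Icc (0:ℝ) 1, ∀ t ∈ Icc (0:ℝ) 1, |u k s - u k t| ≤ Mψ * |s - t| := by
    intro k s hs t ht
    rcases le_total s t with h | h
    · exact huL k s hs t ht h
    · rw [abs_sub_comm, abs_sub_comm s]; exact huL k t ht s hs h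
  have I0 : (0:ℝ) ∈ Icc (0:ℝ) 1 := by simp
  have I1 : (1:ℝ) ∈ Icc (0:ℝ) 1 := by simp
  have hub : ∀ k, ∀ s ∈ Icc (0:ℝ) 1, u k s ∈ Icc um (u0 + Mψ) := by
    intro k s hs
    have h1 := hmon k I0 hs hs.1
    have h2 := mvt_le (hRS k).hu (C := Mψ) le_rfl hs.1 hs.2 (fun x _ => hψM k _)
    rw [(hRS k).u0] at h1 h2
    have h3 : Mψ * (s - 0) ≤ Mψ := by nlinarith [hs.2]
    exact ⟨(hd k).1.trans h1, by linarith [(hd k).2, hds.2]⟩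
  obtain ⟨v, hvc, φ, hφ, hlim⟩ := compact_aux hMψ0 hub huL'
  have hεφ : Tendsto (fun k => ε (φ k)) atTop (𝓝 0) := hεlim.comp hφ.tendsto_atTop
  have halim : ∀ s, Tendsto (fun k => (s + ε (φ k)) ^ m) atTop (𝓝 (s ^ m)) := by
    intro s
    have := (hεφ.const_add s).pow m
    simpa using this
  have hac : ∀ k, ContinuousOn (fun s => (s + ε k) ^ m) (Icc 0 1) := fun k => by fun_prop
  have haA : ∀ k, ∀ t ∈ Icc (0:ℝ) 1, (t + ε k) ^ m ≤ 2 ^ m := fun k t ht =>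
    pow_le_pow_left₀ (by linarith [ht.1, hεpos k]) (by linarith [ht.2, hε1 k]) m
  have hcg : ∀ k, ContinuousOn (fun s => (s + ε k) ^ m * g (u k s)) (Icc 0 1) := fun k =>
    (hac k).mul (hg.continuous.comp_continuousOn (cont_of (hRS k).hu))
  have hcψ : ∀ k, ContinuousOn (fun s => psi q (C + 1) (ε k) (w k s / (s + ε k) ^ m)) (Icc 0 1) := by
    intro k
    obtain ⟨K, hK⟩ := psi_lip hq hq1 hY (hεpos k)
    exact hK.continuous.comp_continuousOn
      ((cont_of (hRS k).hw).div (hac k) (fun t ht => (hapos k t ht).ne'))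
  set W : ℝ → ℝ := fun r => ∫ s in (0:ℝ)..r, s ^ m * g (v s) with hW
  have hwlim : ∀ r ∈ Icc (0:ℝ) 1, Tendsto (fun k => w (φ k) r) atTop (𝓝 (W r)) := by
    intro r hr
    have := dct_aux (F := fun k s => (s + ε (φ k)) ^ m * g (u (φ k) s)) (f := fun s => s ^ m * g (v s))
      (M := 2 ^ m * Mg) (fun k => hcg (φ k)) (by
        intro k s hs
        rw [abs_mul, abs_of_pos (hapos _ s hs)]
        exact mul_le_mul (haA _ s hs) (hgb _) (abs_nonneg _) (by positivity)) (by
        intro s hs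
        exact (halim s).mul ((hg.continuous.tendsto _).comp (hlim s (Ioc_subset_Icc_self hs)))) hr
    refine this.congr fun k => ?_
    rw [ftc_aux (hRS (φ k)).hw (hcg (φ k)) hr, (hRS (φ k)).w0, sub_zero]
  have hWb : ∀ r ∈ Icc (0:ℝ) 1, 0 ≤ W r ∧ W r ≤ C * r * r ^ m := by
    intro r hr
    refine ⟨ge_of_tendsto' (hwlim r hr) fun k => hwn _ r hr, ?_⟩
    refine le_of_tendsto_of_tendsto' (hwlim r hr) ((halim r).const_mul (C * r)) fun k => ?_
    have := hwb (φ k) r hr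
    rwa [div_le_iff₀ (hapos _ r hr)] at this
  have hd0 : Tendsto (fun k => d (φ k)) atTop (𝓝 (v 0)) := by
    refine (hlim 0 I0).congr fun k => (hRS (φ k)).u0
  refine ⟨v, W, hvc, ?_, ⟨?_, ?_⟩, ?_, rfl, hWb, ?_, ?_⟩
  · intro x hx y hy hxy
    exact le_of_tendsto_of_tendsto' (hlim x hx) (hlim y hy) fun k => hmon _ hx hy hxy
  · exact ge_of_tendsto' hd0 fun k => (hd _).1
  · exact (le_of_tendsto' hd0 fun k => (hd _).2).trans_lt hds.2
  · exact ge_of_tendsto' (hlim 1 I1) fun k => hu1 _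
  · exact tendsto_nhds_unique (hwlim 1 I1) (by simp only [hw1]; exact tendsto_const_nhds)
  · intro r hr
    have := dct_aux (F := fun k s => psi q (C + 1) (ε (φ k)) (w (φ k) s / (s + ε (φ k)) ^ m))
      (f := fun s => (W s / s ^ m) ^ q)
      (M := Mψ) (fun k => hcψ (φ k)) (by
        intro k s hs
        rw [abs_of_nonneg (hψ0 _ _)]
        exact hψM _ _) (by
        intro s hs
        have hs' := Ioc_subset_Icc_self hs
        have hsm : 0 < s ^ m := pow_pos hs.1 m
        have h1 : Tendsto (fun k => w (φ k) s / (s + ε (φ k)) ^ m) atTop (𝓝 (W s / s ^ m)) :=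
          (hwlim s hs').div (halim s) hsm.ne'
        have h0 : 0 ≤ W s / s ^ m := div_nonneg (hWb s hs').1 hsm.le
        have h2 : W s / s ^ m ≤ C + 1 := by
          rw [div_le_iff₀ hsm]
          refine (hWb s hs').2.trans ?_
          gcongr
          nlinarith [hs.2]
        have h3 : Tendsto (fun k => min (max (w (φ k) s / (s + ε (φ k)) ^ m) 0) (C + 1) + ε (φ k)) atTop
            (𝓝 (W s / s ^ m)) := by
          have := ((h1.max (tendsto_const_nhds (x := (0:ℝ)))).min
            (tendsto_const_nhds (x := C + 1))).add hεφ
          rwa [max_eq_left h0, min_eq_left h2, add_zero] at this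
        have h4 := h3.rpow_const (p := q) (Or.inr hq.le)
        have h5 := hεφ.rpow_const (p := q) (Or.inr hq.le)
        have h6 := h4.sub h5
        rw [Real.zero_rpow hq.ne', sub_zero] at h6
        exact h6) hr
    refine tendsto_nhds_unique (hlim r hr) ?_
    refine (hd0.add this).congr fun k => ?_
    rw [ftc_aux (hRS (φ k)).hu (hcψ (φ k)) hr, (hRS (φ k)).u0]
    ring

theorem single (p : ℝ) (hp : 2 < p) (N : ℕ) (f f' : ℝ → ℝ)
    (hC1 : ∀ s ∈ Ici (0:ℝ), HasDerivWithinAt f (f' s) (Ici 0) s)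
    (hC1' : ContinuousOn f' (Ici 0))
    (hf0 : ∀ s ∈ Ici (0:ℝ), 0 ≤ f s)
    (hf1 : ∃ L ∈ Ico (0:ℝ) 1,
      Tendsto (fun s => f s / s ^ (p - 1)) (nhdsWithin 0 (Ioi 0)) (nhds L))
    (hf2 : ∃ a : ℝ, 1 < a ∧ ∀ᶠ s in atTop, a ≤ f s / s ^ (p - 1))
    (u0 : ℝ) (hu0 : 0 < u0) (hfu0 : f u0 = u0 ^ (p - 1))
    (hfu0' : (p - 1) * u0 ^ (p - 2) < f' u0) :
    ∃ u v : ℝ → ℝ, IsRadialNeumannSolution p N f u v ∧ (∀ r ∈ Icc (0:ℝ) 1, 0 < u r) ∧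
      MonotoneOn u (Icc (0:ℝ) 1) ∧ u 0 < u0 ∧ u0 ≤ u 1 ∧
      ∀ z, 0 ≤ z → z < u0 → f z = z ^ (p - 1) → z ≤ u 0 := by
  have hp1 : 0 < p - 1 := by linarith
  set q : ℝ := 1 / (p - 1) with hqdef
  have hq : 0 < q := by positivity
  have hq1 : q < 1 := by rw [hqdef, div_lt_one hp1]; linarith
  have hqp : q * (p - 1) = 1 := by rw [hqdef]; field_simp
  set m := N - 1 with hm
  set G : ℝ → ℝ := fun s => s ^ (p - 1) - f s with hG
  set G' : ℝ → ℝ := fun s => (p - 1) * s ^ (p - 2) - f' s with hG'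
  have hGd : ∀ s ∈ Ici (0:ℝ), HasDerivWithinAt G (G' s) (Ici 0) s := by
    intro s hs
    have h1 := (Real.hasDerivAt_rpow_const (x := s) (p := p - 1)
      (Or.inr (by linarith))).hasDerivWithinAt (s := Ici 0)
    have e : p - 1 - 1 = p - 2 := by ring
    rw [e] at h1
    exact h1.sub (hC1 s hs)
  have hGc : ContinuousOn G (Ici 0) := fun s hs => (hGd s hs).continuousWithinAt
  have hG'c : ContinuousOn G' (Ici 0) := by
    refine ContinuousOn.sub ?_ hC1'
    exact (continuous_const.mul
      (continuous_id.rpow_const (fun _ => Or.inr (by linarith)))).continuousOn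
  have hf00 : f 0 = 0 := by
    obtain ⟨L, _, hL⟩ := hf1
    have h1 : Tendsto (fun s : ℝ => s ^ (p - 1)) (𝓝[>] 0) (𝓝 0) := by
      have : Continuous (fun s : ℝ => s ^ (p - 1)) :=
        continuous_id.rpow_const (fun _ => Or.inr hp1.le)
      have := this.tendsto 0
      rw [Real.zero_rpow hp1.ne'] at this
      exact this.mono_left nhdsWithin_le_nhds
    have h2 := hL.mul h1
    rw [mul_zero] at h2
    have h3 : Tendsto f (𝓝[>] 0) (𝓝 0) := by
      refine h2.congr' ?_
      filter_upwards [self_mem_nhdsWithin] with s hs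
      exact div_mul_cancel₀ _ (Real.rpow_pos_of_pos hs _).ne'
    have h4 : Tendsto f (𝓝[>] 0) (𝓝 (f 0)) :=
      ((hC1 0 (by simp)).continuousWithinAt).tendsto.mono_left
        (nhdsWithin_mono _ Ioi_subset_Ici_self)
    exact tendsto_nhds_unique h4 h3
  have hG0 : G 0 = 0 := by simp only [hG, hf00, Real.zero_rpow hp1.ne', sub_zero]
  have hGu0 : G u0 = 0 := by simp only [hG, hfu0, sub_self]
  -- upper bound
  obtain ⟨C, hC, hGC⟩ : ∃ C, 0 ≤ C ∧ ∀ s, 0 ≤ s → G s ≤ C := by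
    obtain ⟨a, ha, hev⟩ := hf2
    obtain ⟨S, hS⟩ := (hev.and (eventually_gt_atTop 0)).exists_forall_of_atTop
    obtain ⟨C0, hC0⟩ := (isCompact_Icc (a := 0) (b := S)).exists_bound_of_continuousOn
      (hGc.mono Icc_subset_Ici_self)
    refine ⟨max C0 0, le_max_right _ _, fun s hs => ?_⟩
    rcases le_total s S with h | h
    · exact (le_abs_self _).trans ((hC0 s ⟨hs, h⟩).trans (le_max_left _ _))
    · obtain ⟨h1, h2⟩ := hS s h
      have h3 : 0 < s ^ (p - 1) := Real.rpow_pos_of_pos h2 _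
      rw [le_div_iff₀ h3] at h1
      refine le_trans ?_ (le_max_right _ _)
      simp only [hG]
      nlinarith
  set B : ℝ := u0 + C ^ q + 1 with hB
  have hCq : 0 ≤ C ^ q := Real.rpow_nonneg hC _
  have hB0 : 0 ≤ B := by linarith
  set cl : ℝ → ℝ := fun s => min (max s 0) B with hcl
  have hclm : ∀ s, cl s ∈ Icc 0 B := fun s => ⟨le_min (le_max_right _ _) hB0, min_le_right _ _⟩
  have hcle : ∀ s ∈ Icc 0 B, cl s = s := fun s hs => by
    simp only [hcl]; rw [max_eq_left hs.1, min_eq_left hs.2]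
  have hclL : LipschitzWith 1 cl := (LipschitzWith.id.max_const 0).min_const B
  obtain ⟨Kg, hKg⟩ : ∃ K : ℝ≥0, LipschitzOnWith K G (Icc 0 B) := by
    obtain ⟨M, hM⟩ := (isCompact_Icc (a := 0) (b := B)).exists_bound_of_continuousOn
      (hG'c.mono Icc_subset_Ici_self)
    refine ⟨M.toNNReal, (convex_Icc 0 B).lipschitzOnWith_of_nnnorm_hasDerivWithin_le
      (f' := G') (fun x hx => (hGd x hx.1).mono Icc_subset_Ici_self) (fun x hx => ?_)⟩
    rw [← NNReal.coe_le_coe, coe_nnnorm]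
    exact (hM x hx).trans (Real.le_coe_toNNReal M)
  set g : ℝ → ℝ := fun s => G (cl s) with hg
  have hgG : ∀ s ∈ Icc 0 B, g s = G s := fun s hs => by simp only [hg]; rw [hcle s hs]
  have hgL : LipschitzWith Kg g := by
    refine LipschitzWith.of_dist_le_mul fun x y => ?_
    have h1 := hKg.dist_le_mul _ (hclm x) _ (hclm y)
    have h2 := hclL.dist_le_mul x y
    refine h1.trans ?_
    gcongr
    simpa using h2
  obtain ⟨Mg, hMg⟩ := (isCompact_Icc (a := 0) (b := B)).exists_bound_of_continuousOn
    (hGc.mono Icc_subset_Ici_self)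
  have hgb : ∀ y, |g y| ≤ Mg := fun y => hMg _ (hclm y)
  have hgC : ∀ y, g y ≤ C := fun y => hGC _ (hclm y).1
  -- slope
  obtain ⟨mm, hmm, hGmm⟩ : ∃ mm > 0, G' u0 = - (2 * mm) :=
    ⟨- G' u0 / 2, by simp only [hG']; linarith, by ring⟩
  have hGdu0 : HasDerivAt G (G' u0) u0 := (hGd u0 hu0.le).hasDerivAt (Ici_mem_nhds hu0)
  obtain ⟨δ0, hδ0, hδu, hδ1, hslope⟩ : ∃ δ0 > 0, δ0 ≤ u0 ∧ δ0 ≤ 1 ∧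
      ∀ s, |s - u0| ≤ δ0 → |G s + 2 * mm * (s - u0)| ≤ mm * |s - u0| := by
    have h1 := (hasDerivAt_iff_isLittleO.1 hGdu0).def hmm
    obtain ⟨ρ, hρ, h2⟩ := Metric.eventually_nhds_iff.1 h1
    refine ⟨min (ρ / 2) (min u0 1), by positivity, (min_le_right _ _).trans (min_le_left _ _),
      (min_le_right _ _).trans (min_le_right _ _), fun s hs => ?_⟩
    have h3 := h2 (y := s) (by
      rw [Real.dist_eq]; have := hs.trans (min_le_left _ _); linarith)
    rw [hGu0, hGmm, Real.norm_eq_abs, Real.norm_eq_abs, smul_eq_mul] at h3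
    convert h3 using 2
    ring
  have hG1 : ∀ s ∈ Icc (u0 - δ0) u0, mm * (u0 - s) ≤ G s := by
    intro s hs
    have e : |s - u0| = u0 - s := by rw [abs_sub_comm, abs_of_nonneg (by linarith [hs.2])]
    have := hslope s (by rw [e]; linarith [hs.1])
    rw [e] at this
    have := (abs_le.1 this).1
    linarith
  have hG2 : ∀ s ∈ Icc u0 (u0 + δ0), G s ≤ - (mm * (s - u0)) := by
    intro s hs
    have e : |s - u0| = s - u0 := abs_of_nonneg (by linarith [hs.1])
    have := hslope s (by rw [e]; linarith [hs.2])
    rw [e] at this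
    have := (abs_le.1 this).2
    linarith
  have hg1 : ∀ s ∈ Icc (u0 - δ0) u0, mm * (u0 - s) ≤ g s := fun s hs => by
    rw [hgG s ⟨by linarith [hs.1], by linarith [hs.2]⟩]; exact hG1 s hs
  have hg2 : ∀ s ∈ Icc u0 (u0 + δ0), g s ≤ - (mm * (s - u0)) := fun s hs => by
    rw [hgG s ⟨by linarith [hs.1], by linarith [hs.2]⟩]; exact hG2 s hs
  obtain ⟨um, ⟨humI, hum0⟩, humg⟩ : ∃ r, IsGreatest (Icc 0 (u0 - δ0) ∩ G ⁻¹' {0}) r := by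
    refine IsCompact.exists_isGreatest ?_ ⟨0, ⟨le_rfl, by linarith⟩, hG0⟩
    exact isCompact_Icc.of_isClosed_subset
      ((hGc.mono Icc_subset_Ici_self).preimage_isClosed_of_isClosed isClosed_Icc isClosed_singleton)
      inter_subset_left
  have hum0 : G um = 0 := hum0
  have hzero : ∀ z, 0 ≤ z → z < u0 → G z = 0 → z ≤ um := by
    intro z h1 h2 h3
    refine humg ⟨⟨h1, ?_⟩, h3⟩
    by_contra h4
    push Not at h4
    have := hG1 z ⟨h4.le, h2.le⟩
    have := mul_pos hmm (show 0 < u0 - z by linarith)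
    linarith
  have hgp : ∀ s ∈ Ioo um u0, 0 < g s := by
    intro s hs
    have hs0 : 0 ≤ s := humI.1.trans hs.1.le
    rw [hgG s ⟨hs0, by linarith [hs.2]⟩]
    by_contra hle
    push Not at hle
    rcases le_total s (u0 - δ0) with h | h
    · have h5 := hG1 (u0 - δ0) ⟨le_rfl, by linarith⟩
      have h6 := mul_pos hmm hδ0
      obtain ⟨z, hz, hz0⟩ : (0:ℝ) ∈ G '' Icc s (u0 - δ0) :=
        intermediate_value_Icc h (hGc.mono fun x hx => hs0.trans hx.1)
          ⟨hle, by nlinarith⟩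
      have := hzero z (hs0.trans hz.1) (by linarith [hz.2]) hz0
      linarith [hz.1, hs.1]
    · have := hG1 s ⟨h, hs.2.le⟩
      have := mul_pos hmm (show 0 < u0 - s by linarith [hs.2])
      linarith
  obtain ⟨u, w, huc, humon, hu00, hu1, hwdef, hwb, hw1, hueq⟩ :=
    core hq hq1 m hgL hgb hC hgC (by rw [hgG um ⟨humI.1, by linarith [humI.2]⟩]; exact hum0)
      (show um < u0 by linarith [humI.2]) hgp hδ0 hmm hg1 hg2
  have I0 : (0:ℝ) ∈ Icc (0:ℝ) 1 := by simp
  have I1 : (1:ℝ) ∈ Icc (0:ℝ) 1 := by simp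
  set v : ℝ → ℝ := fun r => (w r / r ^ m) ^ q with hv
  have hw0 : w 0 = 0 := by rw [hwdef]; simp
  have hv0 : v 0 = 0 := by simp only [hv, hw0, zero_div, Real.zero_rpow hq.ne']
  have hv1 : v 1 = 0 := by simp only [hv, hw1, zero_div, Real.zero_rpow hq.ne']
  have hyn : ∀ r ∈ Icc (0:ℝ) 1, 0 ≤ w r / r ^ m := fun r hr =>
    div_nonneg (hwb r hr).1 (pow_nonneg hr.1 m)
  have hyb : ∀ r ∈ Icc (0:ℝ) 1, w r / r ^ m ≤ C * r := fun r hr =>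
    div_le_of_le_mul₀ (pow_nonneg hr.1 m) (mul_nonneg hC hr.1) (hwb r hr).2
  have hvn : ∀ r ∈ Icc (0:ℝ) 1, 0 ≤ v r := fun r hr => Real.rpow_nonneg (hyn r hr) _
  have hvb : ∀ r ∈ Icc (0:ℝ) 1, v r ≤ (C * r) ^ q := fun r hr =>
    Real.rpow_le_rpow (hyn r hr) (hyb r hr) hq.le
  have hwd : ∀ r, HasDerivAt w (r ^ m * g (u r)) r := by
    intro r
    rw [hwdef]
    have hc : Continuous (fun s => s ^ m * g (u s)) :=
      (continuous_id.pow m).mul (hgL.continuous.comp huc)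
    exact intervalIntegral.integral_hasDerivAt_right (hc.intervalIntegrable _ _)
      (hc.stronglyMeasurableAtFilter _ _) hc.continuousAt
  have hvc : ContinuousOn v (Icc 0 1) := by
    intro r hr
    rcases hr.1.eq_or_lt with e | hpos
    · rw [← e]
      show Tendsto v (𝓝[Icc 0 1] 0) (𝓝 (v 0))
      rw [hv0]
      have hc : Continuous (fun r : ℝ => (C * r) ^ q) :=
        (continuous_const.mul continuous_id).rpow_const (fun _ => Or.inr hq.le)
      have hl := hc.tendsto 0
      rw [mul_zero, Real.zero_rpow hq.ne'] at hl
      refine tendsto_of_tendsto_of_tendsto_of_le_of_le' tendsto_const_nhds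
        (hl.mono_left nhdsWithin_le_nhds) ?_ ?_
      · filter_upwards [self_mem_nhdsWithin] with x hx using hvn x hx
      · filter_upwards [self_mem_nhdsWithin] with x hx using hvb x hx
    · refine ContinuousAt.continuousWithinAt ?_
      refine ContinuousAt.rpow_const ?_ (Or.inr hq.le)
      exact (hwd r).continuousAt.div (continuous_pow m).continuousAt (pow_pos hpos m).ne'
  have hud : ∀ r ∈ Icc (0:ℝ) 1, HasDerivWithinAt u (v r) (Icc 0 1) r := by
    intro r hr
    haveI : Fact (r ∈ Icc (0:ℝ) 1) := ⟨hr⟩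
    have h1 : HasDerivWithinAt (fun r => ∫ s in (0:ℝ)..r, v s) (v r) (Icc 0 1) r := by
      refine intervalIntegral.integral_hasDerivWithinAt_right ?_
        (hvc.stronglyMeasurableAtFilter_nhdsWithin measurableSet_Icc r) (hvc r hr)
      refine ContinuousOn.intervalIntegrable ?_
      rw [uIcc_of_le hr.1]
      exact hvc.mono (Icc_subset_Icc le_rfl hr.2)
    exact (h1.const_add (u 0)).congr (fun x hx => hueq x hx) (hueq r hr)
  have hu0n : 0 ≤ u 0 := humI.1.trans hu00.1
  have huB : ∀ r ∈ Icc (0:ℝ) 1, u r ∈ Icc 0 B := by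
    intro r hr
    refine ⟨hu0n.trans (humon I0 hr hr.1), ?_⟩
    have := mvt_le hud (C := C ^ q) le_rfl hr.1 hr.2 (fun t ht => by
      have ht' : t ∈ Icc (0:ℝ) 1 := ⟨ht.1.le, ht.2.le.trans hr.2⟩
      refine (hvb t ht').trans (Real.rpow_le_rpow (mul_nonneg hC ht'.1) ?_ hq.le)
      exact mul_le_of_le_one_right hC ht'.2)
    have h2 : C ^ q * (r - 0) ≤ C ^ q := by nlinarith [hr.2]
    linarith [hu00.2]
  have hgu : ∀ r ∈ Icc (0:ℝ) 1, g (u r) = u r ^ (p - 1) - f (u r) := fun r hr =>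
    hgG _ (huB r hr)
  -- positivity at zero
  have hupos : 0 < u 0 := by
    by_contra hle
    have hz : u 0 = 0 := le_antisymm (not_lt.1 hle) hu0n
    have hvu : ∀ r ∈ Icc (0:ℝ) 1, v r ≤ u r := by
      intro r hr
      rcases hr.1.eq_or_lt with e | hpos
      · rw [← e, hv0]; exact hu0n
      have hur : 0 ≤ u r := (huB r hr).1
      have h1 := mvt_le (f := w) (fun t _ => (hwd t).hasDerivWithinAt) (x := 0) (y := r)
        (C := r ^ m * u r ^ (p - 1)) le_rfl hr.1 hr.2 (fun t ht => by
          have ht' : t ∈ Icc (0:ℝ) 1 := ⟨ht.1.le, ht.2.le.trans hr.2⟩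
          have hut := (huB t ht').1
          rw [hgu t ht']
          have k1 : u t ^ (p - 1) ≤ u r ^ (p - 1) :=
            Real.rpow_le_rpow hut (humon ht' hr ht.2.le) hp1.le
          have k2 := hf0 (u t) hut
          have k3 : t ^ m ≤ r ^ m := pow_le_pow_left₀ ht.1.le ht.2.le m
          calc t ^ m * (u t ^ (p - 1) - f (u t)) ≤ t ^ m * u r ^ (p - 1) :=
                mul_le_mul_of_nonneg_left (by linarith) (pow_nonneg ht.1.le m)
            _ ≤ r ^ m * u r ^ (p - 1) :=
                mul_le_mul_of_nonneg_right k3 (Real.rpow_nonneg hur _))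
      rw [hw0, sub_zero, sub_zero] at h1
      have hrm : 0 < r ^ m := pow_pos hpos m
      have h2 : w r / r ^ m ≤ u r ^ (p - 1) := by
        rw [div_le_iff₀ hrm]
        have k0 : 0 ≤ r ^ m * u r ^ (p - 1) := mul_nonneg hrm.le (Real.rpow_nonneg hur _)
        have : r ^ m * u r ^ (p - 1) * r ≤ r ^ m * u r ^ (p - 1) :=
          mul_le_of_le_one_right k0 hr.2
        linarith
      calc v r ≤ (u r ^ (p - 1)) ^ q := Real.rpow_le_rpow (hyn r hr) h2 hq.le
        _ = u r := by rw [← Real.rpow_mul hur, mul_comm, hqp, Real.rpow_one]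
    have hh : ∀ t ∈ Icc (0:ℝ) 1, HasDerivWithinAt (fun r => u r * Real.exp (-r))
        (v t * Real.exp (-t) + u t * (Real.exp (-t) * (-1))) (Icc 0 1) t := by
      intro t ht
      exact (hud t ht).mul ((hasDerivAt_neg t).exp).hasDerivWithinAt
    have := mvt_le hh (C := 0) le_rfl zero_le_one le_rfl (fun t ht => by
      have := hvu t ⟨ht.1.le, ht.2.le⟩
      have := Real.exp_pos (-t)
      nlinarith)
    simp only [hz, zero_mul, sub_zero] at this
    have h3 := mul_pos (hu0.trans_le hu1) (Real.exp_pos (-1))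
    linarith
  refine ⟨u, v, ⟨hud, hvc, hv0, hv1, ?_⟩, fun r hr => hupos.trans_le (humon I0 hr hr.1), humon,
    hu00.2, hu1, fun z h1 h2 h3 => (hzero z h1 h2 ?_).trans hu00.1⟩
  · intro r hr
    have hr' : r ∈ Icc (0:ℝ) 1 := ⟨hr.1.le, hr.2.le⟩
    have h1 := hwd r
    rw [hgu r hr'] at h1
    refine h1.congr_of_eventuallyEq ?_
    filter_upwards [Ioo_mem_nhds hr.1 hr.2] with s hs
    have hs' : s ∈ Icc (0:ℝ) 1 := ⟨hs.1.le, hs.2.le⟩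
    have hsm : 0 < s ^ m := pow_pos hs.1 m
    have e1 : |v s| ^ (p - 2) * v s = v s ^ (p - 1) := by
      rw [abs_of_nonneg (hvn s hs')]
      rw [show p - 1 = (p - 2) + 1 by ring, Real.rpow_add_one' (hvn s hs') (by linarith)]
    have e2 : v s ^ (p - 1) = w s / s ^ m := by
      simp only [hv]
      rw [← Real.rpow_mul (hyn s hs'), hqp, Real.rpow_one]
    unfold flux
    rw [e1, e2, ← hm]
    field_simp
  · simp only [hG, h3, sub_self]

theorem stmt_1 (p : ℝ) (hp : 2 < p) (N : ℕ) (hN : 1 ≤ N) (f f' : ℝ → ℝ)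
    (hC1 : ∀ s ∈ Ici (0:ℝ), HasDerivWithinAt f (f' s) (Ici 0) s)
    (hC1' : ContinuousOn f' (Ici 0))
    (hf0 : ∀ s ∈ Ici (0:ℝ), 0 ≤ f s ∧ 0 ≤ f' s)
    (hf1 : ∃ L ∈ Ico (0:ℝ) 1,
      Tendsto (fun s => f s / s ^ (p - 1)) (nhdsWithin 0 (Ioi 0)) (nhds L))
    (hf2 : ∃ a : ℝ, 1 < a ∧ ∀ᶠ s in atTop, a ≤ f s / s ^ (p - 1))
    (n : ℕ) (u₀ : Fin n → ℝ) (hinj : Function.Injective u₀)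
    (hf3 : ∀ i, 0 < u₀ i ∧ f (u₀ i) = (u₀ i) ^ (p - 1) ∧
      (p - 1) * (u₀ i) ^ (p - 2) < f' (u₀ i)) :
    ∃ u v : Fin n → ℝ → ℝ,
      (∀ i, IsRadialNeumannSolution p N f (u i) (v i) ∧
        (∀ r ∈ Icc (0:ℝ) 1, 0 < u i r) ∧
        MonotoneOn (u i) (Icc (0:ℝ) 1) ∧
        ¬ (∀ r ∈ Icc (0:ℝ) 1, u i r = u i 0)) ∧
      (∀ i j, i ≠ j → ∃ r ∈ Icc (0:ℝ) 1, u i r ≠ u j r) := by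
  choose u v h using fun i => single p hp N f f' hC1 hC1' (fun s hs => (hf0 s hs).1) hf1 hf2
    (u₀ i) (hf3 i).1 (hf3 i).2.1 (hf3 i).2.2
  refine ⟨u, v, fun i => ?_, fun i j hij => ⟨0, by simp, ?_⟩⟩
  · obtain ⟨h1, h2, h3, h4, h5, _⟩ := h i
    refine ⟨h1, h2, h3, fun hc => ?_⟩
    have := hc 1 (by simp)
    linarith
  · have hlt : ∀ i j, u₀ i < u₀ j → u i 0 < u j 0 := by
      intro i j hl
      obtain ⟨_, _, _, h4, _, _⟩ := h i
      obtain ⟨_, _, _, _, _, h6⟩ := h j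
      exact h4.trans_le (h6 (u₀ i) (hf3 i).1.le hl (hf3 i).2.1)
    rcases lt_or_gt_of_ne (fun e => hij (hinj e)) with e | e
    · exact (hlt i j e).ne
    · exact (hlt j i e).ne'
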